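/- Let f : ℝ² → ℝ² be a C^∞ map with f(0)=0 which has corank one at 0, let λ be its Jacobian determinant, and let η be any null vector field for f. Then j⁴f(0) is A⁴-equivalent to the 4-jet at 0 of (x,y) ↦ (x, x³y + αx²y² + y⁴) for some α ∈ ℝ, or to the 4-jet at 0 of (x,y) ↦ (x, αx²y² + y⁴) for some α ∈ ℝ, if and only if dλ(0) = 0, the Hessian matrix H_λ(0) is the zero matrix, and (η³λ)(0) ≠ 0. -/

import Mathlib

open Filter Topology

noncomputable section

/-- Directional derivative of a scalar function. -/
def dop (v : ℝ × ℝ) (g : ℝ × ℝ → ℝ) : ℝ × ℝ → ℝ :=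
  fun p => fderiv ℝ g p v

/-- Partial derivative operator in the first coordinate. -/
def pdx : (ℝ × ℝ → ℝ) → ℝ × ℝ → ℝ := dop (1, 0)

/-- Partial derivative operator in the second coordinate. -/
def pdy : (ℝ × ℝ → ℝ) → ℝ × ℝ → ℝ := dop (0, 1)

/-- Taylor coefficient `a_{ij} = ∂_x^i ∂_y^j g(0,0) / (i! j!)` of `g` at the origin. -/
def tcoeff (g : ℝ × ℝ → ℝ) (i j : ℕ) : ℝ :=
  (pdx^[i] (pdy^[j] g)) 0 / (Nat.factorial i * Nat.factorial j)

/-- The Jacobian determinant `λ_f` of a map `f : ℝ² → ℝ²`. -/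
def jacDet (f : ℝ × ℝ → ℝ × ℝ) (p : ℝ × ℝ) : ℝ :=
  (fderiv ℝ f p (1, 0)).1 * (fderiv ℝ f p (0, 1)).2 -
    (fderiv ℝ f p (1, 0)).2 * (fderiv ℝ f p (0, 1)).1

/-- `f` has corank one at `0` : the derivative of `f` at `0` has rank one. -/
def CorankOne (f : ℝ × ℝ → ℝ × ℝ) : Prop :=
  LinearMap.rank ((fderiv ℝ f 0).toLinearMap) = 1

/-- `η` is a null vector field for `f` near `0`. -/
def IsNullVF (f η : ℝ × ℝ → ℝ × ℝ) : Prop :=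
  η 0 ≠ 0 ∧ ∃ U ∈ 𝓝 (0 : ℝ × ℝ),
    ContDiffOn ℝ (⊤ : ℕ∞) η U ∧ ∀ p ∈ U, jacDet f p = 0 → fderiv ℝ f p (η p) = 0

/-- The derivative `(ηg)(p) = Dg(p)(η(p))` of `g` along the vector field `η`. -/
def etaD (η : ℝ × ℝ → ℝ × ℝ) (g : ℝ × ℝ → ℝ) : ℝ × ℝ → ℝ :=
  fun p => fderiv ℝ g p (η p)

/-- The iterated derivative `η^k g` along the vector field `η`. -/
def etaIter (η : ℝ × ℝ → ℝ × ℝ) : ℕ → (ℝ × ℝ → ℝ) → ℝ × ℝ → ℝ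
  | 0, g => g
  | k + 1, g => etaD η (etaIter η k g)

/-- The Hessian matrix of second partial derivatives of `g` at `0`. -/
def hess (g : ℝ × ℝ → ℝ) : Matrix (Fin 2) (Fin 2) ℝ :=
  !![pdx (pdx g) 0, pdx (pdy g) 0; pdy (pdx g) 0, pdy (pdy g) 0]

/-- `A^r`-equivalence of the `r`-jets at `0` of two map-germs `(ℝ²,0) → (ℝ²,0)`. -/
def JetEquiv (r : ℕ) (f g : ℝ × ℝ → ℝ × ℝ) : Prop :=
  ∃ φ ψ : ℝ × ℝ → ℝ × ℝ,
    ContDiff ℝ (⊤ : ℕ∞) φ ∧ ContDiff ℝ (⊤ : ℕ∞) ψ ∧ φ 0 = 0 ∧ ψ 0 = 0 ∧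
    Function.Bijective (⇑(fderiv ℝ φ 0)) ∧ Function.Bijective (⇑(fderiv ℝ ψ 0)) ∧
    ∀ i ≤ r, iteratedFDeriv ℝ i (ψ ∘ f ∘ φ) 0 = iteratedFDeriv ℝ i g 0

/-- `A`-equivalence of two map-germs `(ℝ²,0) → (ℝ²,0)`. -/
def AEquiv (f g : ℝ × ℝ → ℝ × ℝ) : Prop :=
  ∃ φ ψ : ℝ × ℝ → ℝ × ℝ,
    ContDiff ℝ (⊤ : ℕ∞) φ ∧ ContDiff ℝ (⊤ : ℕ∞) ψ ∧ φ 0 = 0 ∧ ψ 0 = 0 ∧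
    Function.Bijective (⇑(fderiv ℝ φ 0)) ∧ Function.Bijective (⇑(fderiv ℝ ψ 0)) ∧
    ∀ᶠ p in 𝓝 (0 : ℝ × ℝ), ψ (f (φ p)) = g p

/-- `f` has the form `(x, g(x,y))` where `g` is `C^∞` and the Taylor coefficients of `g`
of total degree `< N` at the origin are prescribed by `P`. -/
def HasForm (f : ℝ × ℝ → ℝ × ℝ) (g : ℝ × ℝ → ℝ) (N : ℕ) (P : ℕ → ℕ → ℝ) : Prop :=
  ContDiff ℝ (⊤ : ℕ∞) g ∧ (∀ p, f p = (p.1, g p)) ∧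
    ∀ i j, i + j < N → tcoeff g i j = P i j

/-
That `λ` vanishes to order `3` with `η³λ(0) ≠ 0` depends only on the `A⁴`-class of the `4`-jet of
`f`: where `λ` vanishes to order `n`, its `n`-th derivative along `η` is its leading form evaluated
at `η(0)`; coordinate changes compose `λ` with a diffeomorphism and multiply it by a nonvanishing
function; and changing `f` beyond its `4`-jet does not affect the `3`-jet of `λ`. Both normal forms
have this property. Conversely, `df(0) ≠ 0` puts `f` in the form `(x, g(x, y))`, where `λ = g_y`, so
after subtracting `g(x, 0)` the `4`-jet is `(x, q)` with a binary quartic `q`. The property says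
that `q` has a `y⁴` term, and a shear and a scaling bring such a `q` to normal form.
-/

open scoped ContDiff

section VanishingOrder

universe u

variable {𝕜 E F G H : Type*} [NontriviallyNormedField 𝕜]
  [NormedAddCommGroup E] [NormedSpace 𝕜 E] [NormedAddCommGroup F] [NormedSpace 𝕜 F]
  [NormedAddCommGroup G] [NormedSpace 𝕜 G] [NormedAddCommGroup H] [NormedSpace 𝕜 H]
  {k m n : ℕ} {f g : E → F} {x : E}

variable (𝕜) in
/-- The `(k - 1)`-jet of `g` at `x` is zero. Two maps have the same `r`-jet exactly when their
difference vanishes to order `r + 1`, which turns jet computations into order counting. -/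
def VanishesToOrder (k : ℕ) (g : E → F) (x : E) : Prop :=
  ∀ i < k, iteratedFDeriv 𝕜 i g x = 0

namespace VanishesToOrder

lemma zero : VanishesToOrder 𝕜 0 g x := fun _ hi => absurd hi (Nat.not_lt_zero _)

lemma mono (hg : VanishesToOrder 𝕜 n g x) (h : m ≤ n) : VanishesToOrder 𝕜 m g x :=
  fun i hi => hg i (hi.trans_le h)

lemma congr (hf : VanishesToOrder 𝕜 n f x) (h : f =ᶠ[𝓝 x] g) : VanishesToOrder 𝕜 n g x :=
  fun i hi => by rw [← (h.iteratedFDeriv 𝕜 i).eq_of_nhds, hf i hi]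

lemma add (hf : VanishesToOrder 𝕜 n f x) (hg : VanishesToOrder 𝕜 n g x)
    (sf : ContDiff 𝕜 ∞ f) (sg : ContDiff 𝕜 ∞ g) :
    VanishesToOrder 𝕜 n (fun y => f y + g y) x := fun i hi => by
  have := iteratedFDeriv_add_apply (sf.of_le (mod_cast le_top)).contDiffAt
    (sg.of_le (mod_cast le_top)).contDiffAt (x := x) (i := i)
  rw [hf i hi, hg i hi, add_zero] at this
  exact this

lemma succ_iff :
    VanishesToOrder 𝕜 (n + 1) g x ↔ g x = 0 ∧ VanishesToOrder 𝕜 n (fderiv 𝕜 g) x := by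
  have hfderiv (i : ℕ) :
      iteratedFDeriv 𝕜 i (fderiv 𝕜 g) x = 0 ↔ iteratedFDeriv 𝕜 (i + 1) g x = 0 := by
    rw [← norm_eq_zero, norm_iteratedFDeriv_fderiv, norm_eq_zero]
  have hzero : iteratedFDeriv 𝕜 0 g x = 0 ↔ g x = 0 := by
    rw [← norm_eq_zero, norm_iteratedFDeriv_zero, norm_eq_zero]
  simp only [VanishesToOrder, hfderiv, ← hzero, Nat.forall_lt_succ_left]

lemma apply_eq_zero (hg : VanishesToOrder 𝕜 n g x) (hn : n ≠ 0) : g x = 0 :=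
  (succ_iff.1 (hg.mono (Nat.one_le_iff_ne_zero.2 hn))).1

lemma fderiv_right (hg : VanishesToOrder 𝕜 (n + 1) g x) : VanishesToOrder 𝕜 n (fderiv 𝕜 g) x :=
  (succ_iff.1 hg).2

lemma clm_comp (L : F →L[𝕜] G) (hg : VanishesToOrder 𝕜 n g x) (sg : ContDiff 𝕜 ∞ g) :
    VanishesToOrder 𝕜 n (fun y => L (g y)) x := fun i hi => by
  have := L.iteratedFDeriv_comp_left sg.contDiffAt (x := x) (i := i) (mod_cast le_top)
  rw [hg i hi] at this
  exact this.trans (by ext; simp)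

lemma bilin (B : F →L[𝕜] G →L[𝕜] H) {g : E → G}
    (hf : VanishesToOrder 𝕜 m f x) (hg : VanishesToOrder 𝕜 n g x)
    (sf : ContDiff 𝕜 ∞ f) (sg : ContDiff 𝕜 ∞ g) :
    VanishesToOrder 𝕜 (m + n) (fun y => B (f y) (g y)) x := fun i hi => by
  rw [← norm_le_zero_iff]
  refine (B.norm_iteratedFDeriv_le_of_bilinear sf sg x (n := i) (mod_cast le_top)).trans ?_
  refine (mul_eq_zero_of_right _ (Finset.sum_eq_zero fun j hj => ?_)).le
  obtain hj | hj : j < m ∨ i - j < n := by have := Finset.mem_range.1 hj; omega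
  · rw [hf j hj, norm_zero, mul_zero, zero_mul]
  · rw [hg _ hj, norm_zero, mul_zero]

lemma comp {F G : Type u} [NormedAddCommGroup F] [NormedSpace 𝕜 F] [NormedAddCommGroup G]
    [NormedSpace 𝕜 G] {g : F → G} {φ : E → F} (hg : VanishesToOrder 𝕜 n g (φ x))
    (sg : ContDiff 𝕜 ∞ g) (sφ : ContDiff 𝕜 ∞ φ) :
    VanishesToOrder 𝕜 n (g ∘ φ) x := by
  induction n generalizing G with
  | zero => exact zero
  | succ n ih =>
    refine succ_iff.2 ⟨hg.apply_eq_zero n.succ_ne_zero, ?_⟩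
    have hchain : fderiv 𝕜 (g ∘ φ) = fun y =>
        ContinuousLinearMap.compL 𝕜 E F G (fderiv 𝕜 g (φ y)) (fderiv 𝕜 φ y) :=
      funext fun y => fderiv_comp y (sg.differentiable (by simp) _) (sφ.differentiable (by simp) _)
    have sg' : ContDiff 𝕜 ∞ (fderiv 𝕜 g) := sg.fderiv_right (by simp)
    rw [hchain]
    exact (ih hg.fderiv_right sg').bilin (n := 0) (ContinuousLinearMap.compL 𝕜 E F G) zero
      (sg'.comp sφ) (sφ.fderiv_right (by simp))

lemma comp_sub_comp {F G : Type u} [NormedAddCommGroup F] [NormedSpace 𝕜 F]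
    [NormedAddCommGroup G] [NormedSpace 𝕜 G] {f g : E → F}
    (hfg : VanishesToOrder 𝕜 n (fun y => f y - g y) x) {P : F → G}
    (sP : ContDiff 𝕜 ∞ P) (sf : ContDiff 𝕜 ∞ f) (sg : ContDiff 𝕜 ∞ g) :
    VanishesToOrder 𝕜 n (fun y => P (f y) - P (g y)) x := by
  induction n generalizing G with
  | zero => exact zero
  | succ n ih =>
    have hx : f x = g x := sub_eq_zero.1 (hfg.apply_eq_zero n.succ_ne_zero)
    refine succ_iff.2 ⟨by rw [hx, sub_self], ?_⟩
    have df := sf.differentiable (by simp)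
    have dg := sg.differentiable (by simp)
    have dP := sP.differentiable (by simp)
    have hf' : ContDiff 𝕜 ∞ (fderiv 𝕜 f) := sf.fderiv_right (by simp)
    have hg' : ContDiff 𝕜 ∞ (fderiv 𝕜 g) := sg.fderiv_right (by simp)
    have hP' : ContDiff 𝕜 ∞ (fderiv 𝕜 P) := sP.fderiv_right (by simp)
    have hsub : VanishesToOrder 𝕜 n (fun y => fderiv 𝕜 f y - fderiv 𝕜 g y) x := by
      have := hfg.fderiv_right
      rwa [show fderiv 𝕜 (fun y => f y - g y) =
        fun y => fderiv 𝕜 f y - fderiv 𝕜 g y from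
        funext fun y => fderiv_fun_sub (df y) (dg y)] at this
    have hchain : fderiv 𝕜 (fun y => P (f y) - P (g y)) = fun y =>
        ContinuousLinearMap.compL 𝕜 E F G (fderiv 𝕜 P (f y) - fderiv 𝕜 P (g y))
          (fderiv 𝕜 f y) +
        ContinuousLinearMap.compL 𝕜 E F G (fderiv 𝕜 P (g y))
          (fderiv 𝕜 f y - fderiv 𝕜 g y) := by
      funext y
      rw [fderiv_fun_sub (f := fun y => P (f y)) (g := fun y => P (g y)) ((dP.comp df) y)
          ((dP.comp dg) y),
        fderiv_fun_comp y (dP _) (df y), fderiv_fun_comp y (dP _) (dg y)]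
      simp
    rw [hchain]
    have h1 := (ih (hfg.mono n.le_succ) hP').bilin (n := 0) (ContinuousLinearMap.compL 𝕜 E F G)
      zero ((hP'.comp sf).sub (hP'.comp sg)) hf'
    have h2 := (zero (𝕜 := 𝕜) (g := fun y => fderiv 𝕜 P (g y)) (x := x)).bilin
      (ContinuousLinearMap.compL 𝕜 E F G) hsub (hP'.comp sg) (hf'.sub hg')
    rw [zero_add] at h2
    exact h1.add h2 (by fun_prop) (by fun_prop)

end VanishesToOrder

lemma vanishesToOrder_sub_iff (sf : ContDiff 𝕜 ∞ f) (sg : ContDiff 𝕜 ∞ g) :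
    VanishesToOrder 𝕜 n (fun y => f y - g y) x ↔
      ∀ i < n, iteratedFDeriv 𝕜 i f x = iteratedFDeriv 𝕜 i g x := by
  refine forall₂_congr fun i _ => ?_
  have := iteratedFDeriv_sub_apply (sf.of_le (mod_cast le_top)).contDiffAt
    (sg.of_le (mod_cast le_top)).contDiffAt (x := x) (i := i)
  rw [← sub_eq_zero (b := iteratedFDeriv 𝕜 i g x), ← this]
  rfl

end VanishingOrder

section LeadingTerm

universe u

variable {𝕜 E F G : Type*} [NontriviallyNormedField 𝕜]
  [NormedAddCommGroup E] [NormedSpace 𝕜 E] [NormedAddCommGroup F] [NormedSpace 𝕜 F]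
  [NormedAddCommGroup G] [NormedSpace 𝕜 G] {n : ℕ} {x : E}

lemma VanishesToOrder.iteratedFDeriv_bilin {H : Type*} [NormedAddCommGroup H] [NormedSpace 𝕜 H]
    (B : F →L[𝕜] G →L[𝕜] H) {u : E → F} {h : E → G} (hh : VanishesToOrder 𝕜 n h x)
    (su : ContDiff 𝕜 ∞ u) (sh : ContDiff 𝕜 ∞ h) (m : Fin n → E) :
    iteratedFDeriv 𝕜 n (fun y => B (u y) (h y)) x m = B (u x) (iteratedFDeriv 𝕜 n h x m) := by
  have hu : VanishesToOrder 𝕜 1 (fun y => u y - u x) x :=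
    succ_iff.2 ⟨sub_self _, zero⟩
  have hsub : VanishesToOrder 𝕜 (n + 1) (fun y => B (u y) (h y) - B (u x) (h y)) x := by
    have := hu.bilin B hh (su.sub contDiff_const) sh
    simpa only [map_sub, sub_apply, add_comm 1 n] using this
  have hfreeze : iteratedFDeriv 𝕜 n (fun y => B (u y) (h y)) x =
      iteratedFDeriv 𝕜 n (fun y => B (u x) (h y)) x :=
    (vanishesToOrder_sub_iff (by fun_prop) (by fun_prop)).1 hsub n n.lt_succ_self
  rw [hfreeze]
  exact congrArg (· m) ((B (u x)).iteratedFDeriv_comp_left sh.contDiffAt (mod_cast le_top))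

lemma VanishesToOrder.iteratedFDeriv_comp {F G : Type u} [NormedAddCommGroup F] [NormedSpace 𝕜 F]
    [NormedAddCommGroup G] [NormedSpace 𝕜 G] {g : F → G} {φ : E → F}
    (hg : VanishesToOrder 𝕜 n g (φ x)) (sg : ContDiff 𝕜 ∞ g) (sφ : ContDiff 𝕜 ∞ φ)
    (m : Fin n → E) :
    iteratedFDeriv 𝕜 n (g ∘ φ) x m =
      iteratedFDeriv 𝕜 n g (φ x) (fun i => fderiv 𝕜 φ x (m i)) := by
  induction n generalizing G with
  | zero => simp
  | succ n ih =>
    have hchain : fderiv 𝕜 (g ∘ φ) = fun y =>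
        (ContinuousLinearMap.compL 𝕜 E F G).flip (fderiv 𝕜 φ y) ((fderiv 𝕜 g ∘ φ) y) :=
      funext fun y => fderiv_comp y (sg.differentiable (by simp) _) (sφ.differentiable (by simp) _)
    have sg' : ContDiff 𝕜 ∞ (fderiv 𝕜 g) := sg.fderiv_right (by simp)
    have hlead := (hg.fderiv_right.comp sg' sφ).iteratedFDeriv_bilin
      (ContinuousLinearMap.compL 𝕜 E F G).flip (sφ.fderiv_right (by simp)) (sg'.comp sφ)
      (Fin.init m)
    rw [iteratedFDeriv_succ_apply_right, hchain, hlead, ih hg.fderiv_right sg',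
      iteratedFDeriv_succ_apply_right]
    rfl

end LeadingTerm

section Homogeneous

variable {E F : Type*} [NormedAddCommGroup E] [NormedSpace ℝ E] [NormedAddCommGroup F]
  [NormedSpace ℝ F] {n : ℕ} {g : E → F}

lemma vanishesToOrder_of_homogeneous (sg : ContDiff ℝ ∞ g)
    (hg : ∀ (t : ℝ) p, g (t • p) = t ^ n • g p) : VanishesToOrder ℝ n g 0 := fun i hi => by
  have si : ContDiff ℝ i g := sg.of_le (mod_cast le_top)
  have hscale : (2 : ℝ) ^ i • iteratedFDeriv ℝ i g 0 = (2 : ℝ) ^ n • iteratedFDeriv ℝ i g 0 := by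
    have h := congrFun (iteratedFDeriv_comp_const_smul (2 : ℝ) si) 0
    simp only [hg, smul_zero] at h
    rw [← h, ← iteratedFDeriv_const_smul_apply si.contDiffAt]
    rfl
  have hne : (2 : ℝ) ^ i - 2 ^ n ≠ 0 :=
    sub_ne_zero.2 (pow_right_injective₀ (by norm_num) (by norm_num) |>.ne hi.ne)
  rw [← sub_eq_zero, ← sub_smul] at hscale
  exact (smul_eq_zero.1 hscale).resolve_left hne

lemma iteratedFDeriv_of_homogeneous (sg : ContDiff ℝ ∞ g)
    (hg : ∀ (t : ℝ) p, g (t • p) = t ^ n • g p) (v : E) :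
    iteratedFDeriv ℝ n g 0 (fun _ => v) = (n.factorial : ℝ) • g v := by
  let L : ℝ →L[ℝ] E := ContinuousLinearMap.toSpanSingleton ℝ v
  have hline : iteratedFDeriv ℝ n (g ∘ L) 0 (fun _ => 1) = iteratedFDeriv ℝ n g 0 (fun _ => v) := by
    rw [L.iteratedFDeriv_comp_right sg 0 (mod_cast le_top)]
    simp [L]
  have hpow : g ∘ L = fun t : ℝ => t ^ n • g v := funext fun t => by simp [L, hg]
  rw [← hline, hpow, ← iteratedDeriv_eq_iteratedFDeriv,
    iteratedDeriv_smul_const (by fun_prop) (g v), iteratedDeriv_pow, Nat.descFactorial_self]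
  simp

end Homogeneous

section Plane

variable {k n : ℕ} {g : ℝ × ℝ → ℝ} {x : ℝ × ℝ}

lemma contDiff_dop (sg : ContDiff ℝ ∞ g) (v : ℝ × ℝ) : ContDiff ℝ ∞ (dop v g) :=
  (sg.fderiv_right (by simp)).clm_apply contDiff_const

lemma pdx_eq_deriv (hg : DifferentiableAt ℝ g x) : pdx g x = deriv (fun t => g (t, x.2)) x.1 :=
  (hg.hasFDerivAt.comp_hasDerivAt x.1
    ((hasDerivAt_id x.1).prodMk (hasDerivAt_const x.1 x.2))).deriv.symm

lemma pdy_eq_deriv (hg : DifferentiableAt ℝ g x) : pdy g x = deriv (fun t => g (x.1, t)) x.2 :=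
  (hg.hasFDerivAt.comp_hasDerivAt x.2
    ((hasDerivAt_const x.2 x.1).prodMk (hasDerivAt_id x.2))).deriv.symm

lemma vanishesToOrder_succ_iff_pd (sg : ContDiff ℝ ∞ g) :
    VanishesToOrder ℝ (k + 1) g x ↔
      g x = 0 ∧ VanishesToOrder ℝ k (pdx g) x ∧ VanishesToOrder ℝ k (pdy g) x := by
  rw [VanishesToOrder.succ_iff]
  refine and_congr_right fun _ => ⟨fun h => ?_, fun ⟨hx, hy⟩ => ?_⟩
  · have heval (v : ℝ × ℝ) : VanishesToOrder ℝ k (dop v g) x :=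
      h.clm_comp (ContinuousLinearMap.apply ℝ ℝ v) (sg.fderiv_right (by simp))
    exact ⟨heval _, heval _⟩
  · have hsplit : fderiv ℝ g = fun p =>
        (ContinuousLinearMap.toSpanSingleton ℝ (ContinuousLinearMap.fst ℝ ℝ ℝ)) (pdx g p) +
        (ContinuousLinearMap.toSpanSingleton ℝ (ContinuousLinearMap.snd ℝ ℝ ℝ)) (pdy g p) := by
      funext p
      ext <;> simp [pdx, pdy, dop]
    rw [hsplit]
    have sx := contDiff_dop sg (1, 0)
    have sy := contDiff_dop sg (0, 1)
    exact (hx.clm_comp _ sx).add (hy.clm_comp _ sy) ((ContinuousLinearMap.contDiff _).comp sx)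
      ((ContinuousLinearMap.contDiff _).comp sy)

lemma pdy_pdx_comm (sg : ContDiff ℝ ∞ g) : pdy (pdx g) = pdx (pdy g) := by
  funext p
  have sg' : Differentiable ℝ (fderiv ℝ g) :=
    (sg.fderiv_right (m := ∞) (by simp)).differentiable (by simp)
  have hsymm : IsSymmSndFDerivAt ℝ g p :=
    sg.contDiffAt.isSymmSndFDerivAt <| by
      rw [minSmoothness_of_isRCLikeNormedField]
      exact WithTop.coe_le_coe.2 le_top
  have hdop (v w : ℝ × ℝ) : dop w (dop v g) p = fderiv ℝ (fderiv ℝ g) p w v :=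
    (congrArg (· w) (fderiv_clm_apply (sg' p) (differentiableAt_const v))).trans (by simp)
  exact (hdop _ _).trans ((hsymm _ _).trans (hdop _ _).symm)

lemma vanishesToOrder_three_iff_hess (sg : ContDiff ℝ ∞ g) :
    VanishesToOrder ℝ 3 g 0 ↔ g 0 = 0 ∧ fderiv ℝ g 0 = 0 ∧ hess g = 0 := by
  have hone (h : ℝ × ℝ → ℝ) : VanishesToOrder ℝ 1 h 0 ↔ h 0 = 0 :=
    VanishesToOrder.succ_iff.trans (and_iff_left .zero)
  have hfderiv : fderiv ℝ g 0 = 0 ↔ pdx g 0 = 0 ∧ pdy g 0 = 0 := by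
    refine ⟨fun h => by simp [pdx, pdy, dop, h], fun ⟨hx, hy⟩ => ?_⟩
    ext
    · simpa [pdx, dop] using hx
    · simpa [pdy, dop] using hy
  have hhess : hess g = 0 ↔ (pdx (pdx g) 0 = 0 ∧ pdx (pdy g) 0 = 0) ∧
      pdy (pdx g) 0 = 0 ∧ pdy (pdy g) 0 = 0 := by
    simp [hess, ← Matrix.ext_iff, Fin.forall_fin_two]
  rw [vanishesToOrder_succ_iff_pd sg, vanishesToOrder_succ_iff_pd (g := pdx g) (contDiff_dop sg _),
    vanishesToOrder_succ_iff_pd (g := pdy g) (contDiff_dop sg _), hfderiv, hhess]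
  simp only [hone]
  tauto

lemma vanishesToOrder_succ_of_pdy (sg : ContDiff ℝ ∞ g)
    (haxis : VanishesToOrder ℝ (k + 1) (fun p : ℝ × ℝ => g (p.1, 0)) 0)
    (hy : VanishesToOrder ℝ k (pdy g) 0) : VanishesToOrder ℝ (k + 1) g 0 := by
  have h0 : g 0 = 0 := haxis.apply_eq_zero k.succ_ne_zero
  induction k generalizing g with
  | zero => exact (vanishesToOrder_succ_iff_pd sg).2 ⟨h0, .zero, .zero⟩
  | succ k ih =>
    have spx : ContDiff ℝ ∞ (pdx g) := contDiff_dop sg _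
    have haxis' : VanishesToOrder ℝ (k + 1) (fun p : ℝ × ℝ => pdx g (p.1, 0)) 0 := by
      have hres : pdx (fun p : ℝ × ℝ => g (p.1, 0)) = fun p => pdx g (p.1, 0) := by
        funext p
        have dg : Differentiable ℝ g := sg.differentiable (by simp)
        rw [pdx_eq_deriv (by fun_prop), pdx_eq_deriv (by fun_prop)]
      exact hres ▸ ((vanishesToOrder_succ_iff_pd (by fun_prop)).1 haxis).2.1
    have hyx : VanishesToOrder ℝ k (pdy (pdx g)) 0 := by
      rw [pdy_pdx_comm sg]
      exact ((vanishesToOrder_succ_iff_pd (contDiff_dop sg _)).1 hy).2.1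
    have hx : VanishesToOrder ℝ (k + 1) (pdx g) 0 :=
      ih spx haxis' hyx (haxis'.apply_eq_zero k.succ_ne_zero)
    exact (vanishesToOrder_succ_iff_pd sg).2 ⟨h0, hx, hy⟩

lemma VanishesToOrder.exists_sub_pow {h : ℝ → ℝ} (hh : VanishesToOrder ℝ n h 0)
    (sh : ContDiff ℝ ∞ h) : ∃ c : ℝ, VanishesToOrder ℝ (n + 1) (fun t => h t - c * t ^ n) 0 := by
  refine ⟨iteratedDeriv n h 0 / n.factorial, (vanishesToOrder_sub_iff sh (by fun_prop)).2 ?_⟩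
  have hpow : VanishesToOrder ℝ n (fun t : ℝ => iteratedDeriv n h 0 / n.factorial * t ^ n) 0 :=
    vanishesToOrder_of_homogeneous (by fun_prop) fun t p => by
      simp only [smul_eq_mul]
      ring
  intro i hi
  obtain hi | rfl := Nat.lt_succ_iff_lt_or_eq.1 hi
  · rw [hh i hi, hpow i hi]
  · have hderiv : iteratedDeriv i (fun t : ℝ => iteratedDeriv i h 0 / i.factorial * t ^ i) 0 =
        iteratedDeriv i h 0 := by
      rw [iteratedDeriv_const_mul_field, iteratedDeriv_pow, Nat.descFactorial_self]
      field_simp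
      simp
    ext
    simp [iteratedFDeriv_apply_eq_iteratedDeriv_mul_prod, hderiv]

/-- The binary form `∑ᵢ aᵢ xⁿ⁻ⁱ yⁱ`; it serves as the leading Taylor form of a function which
vanishes to order `n` at the origin. -/
def binaryForm (n : ℕ) (a : ℕ → ℝ) (p : ℝ × ℝ) : ℝ :=
  ∑ i ∈ Finset.range (n + 1), a i * (p.1 ^ (n - i) * p.2 ^ i)

lemma contDiff_binaryForm (n : ℕ) (a : ℕ → ℝ) : ContDiff ℝ ∞ (binaryForm n a) := by
  unfold binaryForm
  fun_prop

lemma binaryForm_smul (n : ℕ) (a : ℕ → ℝ) (t : ℝ) (p : ℝ × ℝ) :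
    binaryForm n a (t • p) = t ^ n • binaryForm n a p := by
  simp only [binaryForm, smul_eq_mul, Finset.mul_sum, Prod.smul_fst, Prod.smul_snd, mul_pow]
  refine Finset.sum_congr rfl fun i hi => ?_
  rw [← Nat.sub_add_cancel (Finset.mem_range_succ_iff.1 hi), pow_add]
  simp only [Nat.add_sub_cancel]
  ring

lemma binaryForm_zero_left (n : ℕ) (a : ℕ → ℝ) (t : ℝ) : binaryForm n a (0, t) = a n * t ^ n := by
  rw [binaryForm, Finset.sum_range_succ, Finset.sum_eq_zero fun i hi => ?_]
  · simp
  · simp [Nat.sub_ne_zero_of_lt (Finset.mem_range.1 hi)]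

lemma pdy_binaryForm_succ (n : ℕ) (a : ℕ → ℝ) :
    pdy (binaryForm (n + 1) a) = binaryForm n (fun i => (i + 1) * a (i + 1)) := by
  funext p
  rw [pdy_eq_deriv ((contDiff_binaryForm _ _).differentiable (by simp) _)]
  have hterm (i : ℕ) : HasDerivAt (fun t => a (i + 1) * (p.1 ^ (n + 1 - (i + 1)) * t ^ (i + 1)))
      ((i + 1) * a (i + 1) * (p.1 ^ (n - i) * p.2 ^ i)) p.2 := by
    refine (((hasDerivAt_pow (i + 1) p.2).const_mul _).const_mul _).congr_deriv ?_
    rw [Nat.add_sub_add_right, Nat.add_sub_cancel]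
    push_cast
    ring
  simp only [binaryForm, Finset.sum_range_succ' _ (n + 1), pow_zero]
  exact ((HasDerivAt.fun_sum fun i _ => hterm i).add_const _).deriv

lemma VanishesToOrder.exists_sub_binaryForm (hg : VanishesToOrder ℝ n g 0)
    (sg : ContDiff ℝ ∞ g) : ∃ a, VanishesToOrder ℝ (n + 1) (fun p => g p - binaryForm n a p) 0 := by
  induction n generalizing g with
  | zero => exact ⟨fun _ => g 0, succ_iff.2 ⟨by simp [binaryForm], zero⟩⟩
  | succ n ih =>
    obtain ⟨a, ha⟩ := ih ((vanishesToOrder_succ_iff_pd sg).1 hg).2.2 (contDiff_dop sg _)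
    have haxis : VanishesToOrder ℝ (n + 1) (fun t : ℝ => g (t, 0)) 0 :=
      hg.comp (φ := fun t : ℝ => (t, (0 : ℝ))) sg (by fun_prop)
    obtain ⟨c, hc⟩ := haxis.exists_sub_pow (by fun_prop)
    let b : ℕ → ℝ := fun i => if i = 0 then c else a (i - 1) / i
    have sb := contDiff_binaryForm (n + 1) b
    have hb0 (p : ℝ × ℝ) : binaryForm (n + 1) b (p.1, 0) = c * p.1 ^ (n + 1) := by
      simp [binaryForm, Finset.sum_range_succ', b]
    have hpdy : pdy (fun p => g p - binaryForm (n + 1) b p) =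
        fun p => pdy g p - binaryForm n a p := by
      have ha : a = fun i : ℕ => (i + 1 : ℝ) * b (i + 1) := by
        funext i
        simp only [b, Nat.add_sub_cancel, if_neg i.succ_ne_zero]
        push_cast
        field_simp
      rw [ha, ← pdy_binaryForm_succ]
      funext p
      simp only [pdy, dop]
      rw [fderiv_fun_sub (sg.differentiable (by simp) _) (sb.differentiable (by simp) _)]
      rfl
    refine ⟨b, vanishesToOrder_succ_of_pdy (sg.sub sb) ?_ (hpdy ▸ ha)⟩
    simp only [hb0]
    exact VanishesToOrder.comp (φ := Prod.fst) (x := (0 : ℝ × ℝ)) hc (by fun_prop) contDiff_fst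

end Plane

section LocalInverse

variable {E F : Type*} [NormedAddCommGroup E] [NormedSpace ℝ E] [NormedAddCommGroup F]
  [NormedSpace ℝ F]

lemma exists_contDiff_eventuallyEq [HasContDiffBump E] {g : E → F} {U : Set E} {x : E}
    (hg : ContDiffOn ℝ ∞ g U) (hU : U ∈ 𝓝 x) : ∃ h, ContDiff ℝ ∞ h ∧ h =ᶠ[𝓝 x] g := by
  obtain ⟨r, hr, hrU⟩ := Metric.mem_nhds_iff.1 hU
  let b : ContDiffBump x := ⟨r / 4, r / 2, by positivity, by linarith⟩
  refine ⟨fun p => b p • g p, contDiff_iff_contDiffAt.2 fun p => ?_, ?_⟩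
  · by_cases hp : p ∈ Metric.ball x r
    · exact b.contDiff.contDiffAt.smul
        (hg.contDiffAt (mem_of_superset (Metric.isOpen_ball.mem_nhds hp) hrU))
    · have hfar : p ∈ (Metric.closedBall x (r / 2))ᶜ := fun h =>
        hp (Metric.closedBall_subset_ball (by linarith) h)
      refine (contDiffAt_const (c := (0 : F))).congr_of_eventuallyEq ?_
      filter_upwards [Metric.isClosed_closedBall.isOpen_compl.mem_nhds hfar] with q hq
      have hdist : r / 2 < dist q x := not_le.1 hq
      rw [b.zero_of_le_dist hdist.le, zero_smul]
  · filter_upwards [b.eventuallyEq_one] with p hp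
    rw [hp, Pi.one_apply, one_smul]

lemma exists_contDiff_local_inverse [CompleteSpace E] [HasContDiffBump F] {Φ : E → F} {x : E}
    (sΦ : ContDiff ℝ ∞ Φ) (hx : (fderiv ℝ Φ x).IsInvertible) :
    ∃ φ : F → E, ContDiff ℝ ∞ φ ∧ (∀ᶠ q in 𝓝 (Φ x), Φ (φ q) = q) ∧ ∀ᶠ p in 𝓝 x, φ (Φ p) = p := by
  have hderiv {p : E} {L : E ≃L[ℝ] F} (hL : L = fderiv ℝ Φ p) :
      HasFDerivAt Φ (L : E →L[ℝ] F) p :=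
    hL ▸ (sΦ.differentiable (by simp) p).hasFDerivAt
  obtain ⟨L, hL⟩ := hx
  have hne : (∞ : WithTop ℕ∞) ≠ 0 := by simp
  let e := sΦ.contDiffAt.toOpenPartialHomeomorph Φ (hderiv hL) hne
  have hxs : x ∈ e.source :=
    sΦ.contDiffAt.mem_toOpenPartialHomeomorph_source (hderiv hL) hne
  let S : Set E := {p | (fderiv ℝ Φ p).IsInvertible}
  have hS : IsOpen S :=
    ContinuousLinearEquiv.isOpen.preimage (sΦ.continuous_fderiv (by simp))
  have hV : e.target ∩ e.symm ⁻¹' S ∈ 𝓝 (Φ x) := by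
    refine (e.isOpen_inter_preimage_symm hS).mem_nhds ⟨e.map_source hxs, ?_⟩
    change e.symm (e x) ∈ S
    rw [e.left_inv hxs]
    exact ⟨L, hL⟩
  have hsymm : ContDiffOn ℝ ∞ e.symm (e.target ∩ e.symm ⁻¹' S) := fun q ⟨hqt, L', hL'⟩ =>
    (e.contDiffAt_symm hqt (hderiv hL') sΦ.contDiffAt).contDiffWithinAt
  obtain ⟨φ, sφ, hφ⟩ := exists_contDiff_eventuallyEq hsymm hV
  refine ⟨φ, sφ, ?_, ?_⟩
  · filter_upwards [hφ, hV] with q hq hqV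
    rw [hq]
    exact e.right_inv hqV.1
  · filter_upwards [sΦ.continuous.continuousAt.eventually hφ, e.open_source.mem_nhds hxs]
      with p hp hps
    rw [hp]
    exact e.left_inv hps

end LocalInverse

section Jacobian

variable {f g : ℝ × ℝ → ℝ × ℝ} {p : ℝ × ℝ} {n : ℕ}

lemma jacDet_eq_det (f : ℝ × ℝ → ℝ × ℝ) (p : ℝ × ℝ) :
    jacDet f p = LinearMap.det (fderiv ℝ f p : ℝ × ℝ →ₗ[ℝ] ℝ × ℝ) := by
  rw [← LinearMap.det_toMatrix (Module.Basis.finTwoProd ℝ), Matrix.det_fin_two]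
  simp [LinearMap.toMatrix_apply, jacDet, mul_comm]

lemma bijective_fderiv_iff_jacDet_ne_zero :
    Function.Bijective (fderiv ℝ f p) ↔ jacDet f p ≠ 0 := by
  rw [jacDet_eq_det, ← isUnit_iff_ne_zero, ← LinearMap.isUnit_iff_isUnit_det,
    Module.End.isUnit_iff]
  rfl

lemma jacDet_comp (hf : DifferentiableAt ℝ f (g p)) (hg : DifferentiableAt ℝ g p) :
    jacDet (f ∘ g) p = jacDet f (g p) * jacDet g p := by
  simp only [jacDet_eq_det, fderiv_comp p hf hg, ContinuousLinearMap.toLinearMap_comp,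
    LinearMap.det_comp]

lemma contDiff_jacDet (sf : ContDiff ℝ ∞ f) : ContDiff ℝ ∞ (jacDet f) := by
  have hf' (v : ℝ × ℝ) : ContDiff ℝ ∞ (fun p => fderiv ℝ f p v) :=
    (sf.fderiv_right (by simp)).clm_apply contDiff_const
  exact ((hf' _).fst.mul (hf' _).snd).sub ((hf' _).snd.mul (hf' _).fst)

lemma VanishesToOrder.jacDet_sub (h : VanishesToOrder ℝ (n + 1) (fun q => f q - g q) p)
    (sf : ContDiff ℝ ∞ f) (sg : ContDiff ℝ ∞ g) :
    VanishesToOrder ℝ n (fun q => jacDet f q - jacDet g q) p := by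
  have hsub : fderiv ℝ (fun q => f q - g q) = fun q => fderiv ℝ f q - fderiv ℝ g q :=
    funext fun q => fderiv_fun_sub (sf.differentiable (by simp) q) (sg.differentiable (by simp) q)
  exact (hsub ▸ h.fderiv_right).comp_sub_comp
    (P := fun L : (ℝ × ℝ) →L[ℝ] (ℝ × ℝ) =>
      (L (1, 0)).1 * (L (0, 1)).2 - (L (1, 0)).2 * (L (0, 1)).1)
    (by fun_prop) (sf.fderiv_right (by simp)) (sg.fderiv_right (by simp))

lemma jacDet_graph {g : ℝ × ℝ → ℝ} (hg : DifferentiableAt ℝ g p) :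
    jacDet (fun q => (q.1, g q)) p = pdy g p := by
  simp [jacDet, (hasFDerivAt_fst.prodMk hg.hasFDerivAt).fderiv, pdy, dop]

end Jacobian

section JetEquivalence

variable {f g h φ ψ : ℝ × ℝ → ℝ × ℝ} {r : ℕ}

/-- `φ` is smooth and represents the germ of a diffeomorphism `(ℝ²,0) → (ℝ²,0)`: the coordinate
changes that `JetEquiv` and `AEquiv` allow in source and target. -/
structure IsDiffeoGerm (φ : ℝ × ℝ → ℝ × ℝ) : Prop where
  contDiff : ContDiff ℝ ∞ φ
  map_zero : φ 0 = 0
  bijective : Function.Bijective (fderiv ℝ φ 0)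

namespace IsDiffeoGerm

lemma differentiable (hφ : IsDiffeoGerm φ) : Differentiable ℝ φ :=
  hφ.contDiff.differentiable (by simp)

lemma id : IsDiffeoGerm fun p => p :=
  ⟨contDiff_id, rfl, by rw [fderiv_fun_id]; exact Function.bijective_id⟩

lemma comp (hψ : IsDiffeoGerm ψ) (hφ : IsDiffeoGerm φ) : IsDiffeoGerm (ψ ∘ φ) where
  contDiff := hψ.contDiff.comp hφ.contDiff
  map_zero := by rw [Function.comp_apply, hφ.map_zero, hψ.map_zero]
  bijective := by
    rw [fderiv_comp 0 (hψ.differentiable _) (hφ.differentiable 0), hφ.map_zero]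
    exact hψ.bijective.comp hφ.bijective

lemma of_continuousLinearEquiv (L : (ℝ × ℝ) ≃L[ℝ] (ℝ × ℝ)) : IsDiffeoGerm L where
  contDiff := L.contDiff
  map_zero := L.map_zero
  bijective := by
    rw [L.fderiv]
    exact L.bijective

lemma triangular {h : ℝ → ℝ} (sh : ContDiff ℝ ∞ h) (h0 : h 0 = 0) {c d : ℝ}
    (hc : c ≠ 0) (hd : d ≠ 0) : IsDiffeoGerm fun p => (c * p.1, d * (p.2 - h p.1)) := by
  refine ⟨by fun_prop, by simp [h0], bijective_fderiv_iff_jacDet_ne_zero.2 ?_⟩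
  have hh : HasFDerivAt (fun p : ℝ × ℝ => h p.1) _ 0 :=
    (sh.differentiable (by simp) _).hasFDerivAt.comp (0 : ℝ × ℝ) hasFDerivAt_fst
  have hderiv : HasFDerivAt (fun p : ℝ × ℝ => (c * p.1, d * (p.2 - h p.1))) _ 0 :=
    (hasFDerivAt_fst.const_mul c).prodMk ((hasFDerivAt_snd.sub hh).const_mul d)
  simp [jacDet, hderiv.fderiv, hc, hd]

lemma exists_inverse (hφ : IsDiffeoGerm φ) :
    ∃ χ, IsDiffeoGerm χ ∧ (∀ᶠ p in 𝓝 0, φ (χ p) = p) ∧ ∀ᶠ p in 𝓝 0, χ (φ p) = p := by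
  have hinv : (fderiv ℝ φ 0).IsInvertible :=
    ⟨.ofBijective _ (LinearMap.ker_eq_bot.2 hφ.bijective.1)
      (LinearMap.range_eq_top.2 hφ.bijective.2), ContinuousLinearEquiv.coe_ofBijective _ _ _⟩
  obtain ⟨χ, sχ, hright, hleft⟩ := exists_contDiff_local_inverse hφ.contDiff hinv
  rw [hφ.map_zero] at hright
  have hχ0 : χ 0 = 0 := by simpa only [hφ.map_zero] using hleft.self_of_nhds
  refine ⟨χ, ⟨sχ, hχ0, bijective_fderiv_iff_jacDet_ne_zero.2 fun hχ => ?_⟩, hright, hleft⟩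
  have hid : fderiv ℝ (φ ∘ χ) 0 = ContinuousLinearMap.id ℝ (ℝ × ℝ) :=
    (EventuallyEq.fderiv_eq (f := fun p => p) hright).trans fderiv_fun_id
  have hmul := jacDet_comp (hφ.differentiable (χ 0)) (sχ.differentiable (by simp) 0)
  rw [hχ, mul_zero, jacDet_eq_det, hid] at hmul
  simp at hmul

end IsDiffeoGerm

lemma aEquiv_iff :
    AEquiv f g ↔ ∃ φ ψ, IsDiffeoGerm φ ∧ IsDiffeoGerm ψ ∧ ψ ∘ f ∘ φ =ᶠ[𝓝 0] g :=
  ⟨fun ⟨φ, ψ, sφ, sψ, hφ0, hψ0, bφ, bψ, h⟩ => ⟨φ, ψ, ⟨sφ, hφ0, bφ⟩, ⟨sψ, hψ0, bψ⟩, h⟩,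
    fun ⟨φ, ψ, ⟨sφ, hφ0, bφ⟩, ⟨sψ, hψ0, bψ⟩, h⟩ => ⟨φ, ψ, sφ, sψ, hφ0, hψ0, bφ, bψ, h⟩⟩

lemma jetEquiv_iff (sf : ContDiff ℝ ∞ f) (sg : ContDiff ℝ ∞ g) :
    JetEquiv r f g ↔ ∃ φ ψ, IsDiffeoGerm φ ∧ IsDiffeoGerm ψ ∧
      VanishesToOrder ℝ (r + 1) (fun p => ψ (f (φ p)) - g p) 0 := by
  have hjet {φ ψ : ℝ × ℝ → ℝ × ℝ} (sφ : ContDiff ℝ ∞ φ) (sψ : ContDiff ℝ ∞ ψ) :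
      VanishesToOrder ℝ (r + 1) (fun p => ψ (f (φ p)) - g p) 0 ↔
        ∀ i ≤ r, iteratedFDeriv ℝ i (ψ ∘ f ∘ φ) 0 = iteratedFDeriv ℝ i g 0 := by
    simp only [← Nat.lt_succ_iff]
    exact vanishesToOrder_sub_iff (sψ.comp (sf.comp sφ)) sg
  exact
    ⟨fun ⟨φ, ψ, sφ, sψ, hφ0, hψ0, bφ, bψ, h⟩ =>
      ⟨φ, ψ, ⟨sφ, hφ0, bφ⟩, ⟨sψ, hψ0, bψ⟩, (hjet sφ sψ).2 h⟩,
    fun ⟨φ, ψ, ⟨sφ, hφ0, bφ⟩, ⟨sψ, hψ0, bψ⟩, h⟩ =>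
      ⟨φ, ψ, sφ, sψ, hφ0, hψ0, bφ, bψ, (hjet sφ sψ).1 h⟩⟩

lemma AEquiv.jetEquiv (h : AEquiv f g) : JetEquiv r f g :=
  let ⟨φ, ψ, sφ, sψ, hφ0, hψ0, bφ, bψ, he⟩ := h
  ⟨φ, ψ, sφ, sψ, hφ0, hψ0, bφ, bψ, fun i _ =>
    (EventuallyEq.iteratedFDeriv ℝ (f₁ := ψ ∘ f ∘ φ) he i).eq_of_nhds⟩

lemma JetEquiv.trans (hfg : JetEquiv r f g) (hgh : JetEquiv r g h) (sf : ContDiff ℝ ∞ f)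
    (sg : ContDiff ℝ ∞ g) (sh : ContDiff ℝ ∞ h) : JetEquiv r f h := by
  obtain ⟨φ₁, ψ₁, hφ₁, hψ₁, h₁⟩ := (jetEquiv_iff sf sg).1 hfg
  obtain ⟨φ₂, ψ₂, hφ₂, hψ₂, h₂⟩ := (jetEquiv_iff sg sh).1 hgh
  refine (jetEquiv_iff sf sh).2 ⟨φ₁ ∘ φ₂, ψ₂ ∘ ψ₁, hφ₁.comp hφ₂, hψ₂.comp hψ₁, ?_⟩
  have sfφ : ContDiff ℝ ∞ fun p => ψ₁ (f (φ₁ p)) := hψ₁.contDiff.comp (sf.comp hφ₁.contDiff)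
  rw [← hφ₂.map_zero] at h₁
  have h₃ := (h₁.comp (sfφ.sub sg) hφ₂.contDiff).comp_sub_comp hψ₂.contDiff
    (sfφ.comp hφ₂.contDiff) (sg.comp hφ₂.contDiff)
  have h₄ := h₃.add h₂ ((hψ₂.contDiff.comp (sfφ.comp hφ₂.contDiff)).sub
    (hψ₂.contDiff.comp (sg.comp hφ₂.contDiff)))
    ((hψ₂.contDiff.comp (sg.comp hφ₂.contDiff)).sub sh)
  simpa only [Function.comp_apply, sub_add_sub_cancel] using h₄

lemma JetEquiv.symm (hfg : JetEquiv r f g) (sf : ContDiff ℝ ∞ f) (sg : ContDiff ℝ ∞ g)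
    (hf0 : f 0 = 0) : JetEquiv r g f := by
  obtain ⟨φ, ψ, hφ, hψ, h⟩ := (jetEquiv_iff sf sg).1 hfg
  obtain ⟨φ', hφ', hφφ', -⟩ := hφ.exists_inverse
  obtain ⟨ψ', hψ', -, hψ'ψ⟩ := hψ.exists_inverse
  refine (jetEquiv_iff sg sf).2 ⟨φ', ψ', hφ', hψ', ?_⟩
  have sfφ : ContDiff ℝ ∞ fun p => ψ (f (φ p)) := hψ.contDiff.comp (sf.comp hφ.contDiff)
  rw [← hφ'.map_zero] at h
  have hback := ((h.comp (sfφ.sub sg) hφ'.contDiff).comp_sub_comp hψ'.contDiff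
    (sfφ.comp hφ'.contDiff) (sg.comp hφ'.contDiff)).clm_comp (-ContinuousLinearMap.id ℝ (ℝ × ℝ))
    ((hψ'.contDiff.comp (sfφ.comp hφ'.contDiff)).sub (hψ'.contDiff.comp (sg.comp hφ'.contDiff)))
  have hf : Tendsto f (𝓝 0) (𝓝 0) := by simpa only [hf0] using sf.continuous.tendsto 0
  refine hback.congr ?_
  filter_upwards [hφφ', hf.eventually hψ'ψ] with p hp hfp
  simp [hp, hfp]

end JetEquivalence

section NullOrder

variable {f g φ ψ : ℝ × ℝ → ℝ × ℝ} {n : ℕ}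

/-- The Jacobian determinant of `f` vanishes to order `n` at the origin and its leading form is
nonzero on every nonzero vector of the kernel of `Df(0)`. Unlike the iterated derivative along a
null vector field, this involves no choice, and it is visibly invariant. -/
def HasNullOrder (n : ℕ) (f : ℝ × ℝ → ℝ × ℝ) : Prop :=
  VanishesToOrder ℝ n (jacDet f) 0 ∧
    ∀ v ≠ 0, fderiv ℝ f 0 v = 0 → iteratedFDeriv ℝ n (jacDet f) 0 (fun _ => v) ≠ 0

lemma HasNullOrder.of_vanishesToOrder_sub (hf : HasNullOrder n f) (sf : ContDiff ℝ ∞ f)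
    (sg : ContDiff ℝ ∞ g) (hfg : VanishesToOrder ℝ (n + 2) (fun p => f p - g p) 0) :
    HasNullOrder n g := by
  have hderiv : fderiv ℝ f 0 = fderiv ℝ g 0 := by
    have := hfg.fderiv_right.apply_eq_zero n.succ_ne_zero
    rwa [fderiv_fun_sub (sf.differentiable (by simp) 0) (sg.differentiable (by simp) 0),
      sub_eq_zero] at this
  have hjac := (vanishesToOrder_sub_iff (contDiff_jacDet sf) (contDiff_jacDet sg)).1
    (hfg.jacDet_sub sf sg)
  refine ⟨fun i hi => (hjac i (hi.trans n.lt_succ_self)).symm.trans (hf.1 i hi),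
    fun v hv hker => ?_⟩
  rw [← hjac n n.lt_succ_self]
  exact hf.2 v hv (hderiv ▸ hker)

lemma HasNullOrder.comp (hf : HasNullOrder n f) (sf : ContDiff ℝ ∞ f) (hf0 : f 0 = 0)
    (hφ : IsDiffeoGerm φ) (hψ : IsDiffeoGerm ψ) : HasNullOrder n (ψ ∘ f ∘ φ) := by
  have df : Differentiable ℝ f := sf.differentiable (by simp)
  let u : ℝ × ℝ → ℝ := fun p => jacDet ψ (f (φ p)) * jacDet φ p
  have su : ContDiff ℝ ∞ u :=
    ((contDiff_jacDet hψ.contDiff).comp (sf.comp hφ.contDiff)).mul (contDiff_jacDet hφ.contDiff)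
  have hu0 : u 0 ≠ 0 := by
    simp only [u, hφ.map_zero, hf0]
    exact mul_ne_zero (bijective_fderiv_iff_jacDet_ne_zero.1 hψ.bijective)
      (bijective_fderiv_iff_jacDet_ne_zero.1 hφ.bijective)
  have hjac : jacDet (ψ ∘ f ∘ φ) =
      fun p => ContinuousLinearMap.mul ℝ ℝ (u p) ((jacDet f ∘ φ) p) := by
    funext p
    rw [jacDet_comp (hψ.differentiable _) ((df _).comp p (hφ.differentiable p)),
      jacDet_comp (df _) (hφ.differentiable p)]
    simp only [u, Function.comp_apply, ContinuousLinearMap.mul_apply']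
    ring
  have hvan : VanishesToOrder ℝ n (jacDet f) (φ 0) := hφ.map_zero.symm ▸ hf.1
  have sjac := contDiff_jacDet sf
  have hcomp := hvan.comp sjac hφ.contDiff
  refine ⟨?_, fun v hv hker => ?_⟩
  · rw [hjac]
    simpa only [zero_add] using VanishesToOrder.zero.bilin (ContinuousLinearMap.mul ℝ ℝ) hcomp su
      (sjac.comp hφ.contDiff)
  · have hker' : fderiv ℝ f 0 (fderiv ℝ φ 0 v) = 0 := by
      rw [fderiv_comp 0 (hψ.differentiable _) ((df _).comp 0 (hφ.differentiable 0)),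
        fderiv_comp 0 (df _) (hφ.differentiable 0), Function.comp_apply, hφ.map_zero, hf0] at hker
      exact (map_eq_zero_iff _ hψ.bijective.1).1 hker
    rw [hjac, hcomp.iteratedFDeriv_bilin _ su (sjac.comp hφ.contDiff),
      hvan.iteratedFDeriv_comp sjac hφ.contDiff, hφ.map_zero]
    exact mul_ne_zero hu0 (hf.2 _ ((map_ne_zero_iff _ hφ.bijective.1).2 hv) hker')

lemma HasNullOrder.of_jetEquiv (hf : HasNullOrder n f) (sf : ContDiff ℝ ∞ f)
    (sg : ContDiff ℝ ∞ g) (hf0 : f 0 = 0) (hfg : JetEquiv (n + 1) f g) : HasNullOrder n g := by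
  obtain ⟨φ, ψ, hφ, hψ, hvan⟩ := (jetEquiv_iff sf sg).1 hfg
  exact (hf.comp sf hf0 hφ hψ).of_vanishesToOrder_sub
    (hψ.contDiff.comp (sf.comp hφ.contDiff)) sg hvan

lemma etaIter_succ' (η : ℝ × ℝ → ℝ × ℝ) (n : ℕ) (g : ℝ × ℝ → ℝ) :
    etaIter η (n + 1) g = etaIter η n (etaD η g) := by
  induction n with
  | zero => rfl
  | succ n ih => exact congrArg (etaD η) ih

lemma VanishesToOrder.etaIter_eq {η : ℝ × ℝ → ℝ × ℝ} {g : ℝ × ℝ → ℝ} {x : ℝ × ℝ}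
    (hg : VanishesToOrder ℝ n g x) (sg : ContDiff ℝ ∞ g) (sη : ContDiff ℝ ∞ η) :
    etaIter η n g x = iteratedFDeriv ℝ n g x fun _ => η x := by
  induction n generalizing g with
  | zero => simp [etaIter]
  | succ n ih =>
    have sg' : ContDiff ℝ ∞ (fderiv ℝ g) := sg.fderiv_right (by simp)
    let B : (ℝ × ℝ) →L[ℝ] ((ℝ × ℝ) →L[ℝ] ℝ) →L[ℝ] ℝ := ContinuousLinearMap.apply ℝ ℝ
    have hvan : VanishesToOrder ℝ n (etaD η g) x := by
      have := zero.bilin B hg.fderiv_right sη sg'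
      rw [zero_add] at this
      exact this
    rw [etaIter_succ', ih hvan (sg'.clm_apply sη), iteratedFDeriv_succ_apply_right]
    exact hg.fderiv_right.iteratedFDeriv_bilin B sη sg' _

lemma etaIter_congr {η ξ : ℝ × ℝ → ℝ × ℝ} {x : ℝ × ℝ} (h : η =ᶠ[𝓝 x] ξ) (g : ℝ × ℝ → ℝ)
    (k : ℕ) : etaIter η k g =ᶠ[𝓝 x] etaIter ξ k g := by
  induction k with
  | zero => exact EventuallyEq.rfl
  | succ k ih =>
    filter_upwards [ih.fderiv (𝕜 := ℝ), h] with p hp hq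
    simp only [etaIter, etaD, hp, hq]

end NullOrder

section CorankOne

variable {f : ℝ × ℝ → ℝ × ℝ} {v w : ℝ × ℝ} {n : ℕ}

lemma CorankOne.finrank_ker (hf : CorankOne f) :
    Module.finrank ℝ (LinearMap.ker (fderiv ℝ f 0 : ℝ × ℝ →ₗ[ℝ] ℝ × ℝ)) = 1 := by
  have hrange : Module.finrank ℝ (LinearMap.range (fderiv ℝ f 0 : ℝ × ℝ →ₗ[ℝ] ℝ × ℝ)) = 1 :=
    Module.finrank_eq_of_rank_eq (hf.trans Nat.cast_one.symm)
  have := LinearMap.finrank_range_add_finrank_ker (fderiv ℝ f 0 : ℝ × ℝ →ₗ[ℝ] ℝ × ℝ)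
  rw [hrange, Module.finrank_prod, Module.finrank_self] at this
  omega

lemma CorankOne.exists_ne_zero_fderiv_eq_zero (hf : CorankOne f) :
    ∃ v ≠ 0, fderiv ℝ f 0 v = 0 := by
  obtain ⟨v, hv, -⟩ := finrank_eq_one_iff'.1 hf.finrank_ker
  exact ⟨v, fun h => hv (Subtype.ext h), v.2⟩

lemma CorankOne.fderiv_ne_zero (hf : CorankOne f) : fderiv ℝ f 0 ≠ 0 := fun h => by
  simp [CorankOne, h] at hf

lemma CorankOne.jacDet_eq_zero (hf : CorankOne f) : jacDet f 0 = 0 := by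
  obtain ⟨v, hv, hker⟩ := hf.exists_ne_zero_fderiv_eq_zero
  refine of_not_not fun hne => hv ((bijective_fderiv_iff_jacDet_ne_zero.2 hne).1 ?_)
  rw [hker, map_zero]

lemma CorankOne.exists_smul_eq (hf : CorankOne f) (hv : v ≠ 0) (hfv : fderiv ℝ f 0 v = 0)
    (hfw : fderiv ℝ f 0 w = 0) : ∃ c : ℝ, c • v = w := by
  obtain ⟨c, hc⟩ := exists_smul_eq_of_finrank_eq_one hf.finrank_ker
    (x := ⟨v, hfv⟩) (fun h => hv (congrArg Subtype.val h)) ⟨w, hfw⟩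
  exact ⟨c, congrArg Subtype.val hc⟩

lemma CorankOne.hasNullOrder_iff_iteratedFDeriv (hf : CorankOne f) (hv : v ≠ 0)
    (hfv : fderiv ℝ f 0 v = 0) :
    HasNullOrder n f ↔ VanishesToOrder ℝ n (jacDet f) 0 ∧
      iteratedFDeriv ℝ n (jacDet f) 0 (fun _ => v) ≠ 0 := by
  refine and_congr_right fun _ => ⟨fun h => h v hv hfv, fun h w hw hfw => ?_⟩
  obtain ⟨c, rfl⟩ := hf.exists_smul_eq hv hfv hfw
  rw [ContinuousMultilinearMap.map_smul_univ]
  exact smul_ne_zero (Finset.prod_ne_zero_iff.2 fun _ _ => (smul_ne_zero_iff.1 hw).1) h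

lemma CorankOne.hasNullOrder_iff_etaIter {η : ℝ × ℝ → ℝ × ℝ} {U : Set (ℝ × ℝ)}
    (hf : CorankOne f) (sf : ContDiff ℝ ∞ f) (hU : U ∈ 𝓝 0) (sη : ContDiffOn ℝ ∞ η U)
    (hη : η 0 ≠ 0) (hfη : fderiv ℝ f 0 (η 0) = 0) :
    HasNullOrder n f ↔
      VanishesToOrder ℝ n (jacDet f) 0 ∧ etaIter η n (jacDet f) 0 ≠ 0 := by
  obtain ⟨ξ, sξ, hξ⟩ := exists_contDiff_eventuallyEq sη hU
  rw [hf.hasNullOrder_iff_iteratedFDeriv hη hfη]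
  refine and_congr_right fun hvan => ?_
  rw [(etaIter_congr hξ.symm _ n).eq_of_nhds, hvan.etaIter_eq (contDiff_jacDet sf) sξ,
    hξ.eq_of_nhds]

end CorankOne

section GraphForm

variable {E F : Type*} [NormedAddCommGroup E] [NormedSpace ℝ E] [NormedAddCommGroup F]
  [NormedSpace ℝ F] {f : ℝ × ℝ → ℝ × ℝ}

lemma exists_continuousLinearEquiv_apply_apply_eq {L : E →L[ℝ] F} {v : E} {w : F} (hL : L ≠ 0)
    (hv : v ≠ 0) (hw : w ≠ 0) : ∃ (A : E ≃L[ℝ] E) (B : F ≃L[ℝ] F), B (L (A v)) = w := by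
  obtain ⟨u, hu⟩ := DFunLike.ne_iff.1 hL
  have hu0 : u ≠ 0 := fun h => hu (by simp [h])
  obtain ⟨A, hA⟩ := SeparatingDual.exists_continuousLinearEquiv_apply_eq (R := ℝ) hv hu0
  obtain ⟨B, hB⟩ := SeparatingDual.exists_continuousLinearEquiv_apply_eq (R := ℝ) hu hw
  exact ⟨A, B, by rw [hA, hB]⟩

lemma exists_aEquiv_graph (hf : fderiv ℝ f 0 ≠ 0) (sf : ContDiff ℝ ∞ f) (hf0 : f 0 = 0) :
    ∃ g : ℝ × ℝ → ℝ, ContDiff ℝ ∞ g ∧ g 0 = 0 ∧ AEquiv f fun p => (p.1, g p) := by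
  obtain ⟨A, B, hAB⟩ := exists_continuousLinearEquiv_apply_apply_eq hf
    (v := (1, 0)) (w := (1, 0)) (by simp) (by simp)
  let F : ℝ × ℝ → ℝ × ℝ := fun p => B (f (A p))
  have sF : ContDiff ℝ ∞ F := B.contDiff.comp (sf.comp A.contDiff)
  have dF : Differentiable ℝ F := sF.differentiable (by simp)
  have hF0 : F 0 = 0 := by simp [F, hf0]
  have hF' (v : ℝ × ℝ) : fderiv ℝ F 0 v = B (fderiv ℝ f 0 (A v)) := by
    have df : DifferentiableAt ℝ f (A 0) := sf.differentiable (by simp) _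
    have hcomp := B.hasFDerivAt.comp (0 : ℝ × ℝ) (df.hasFDerivAt.comp 0 A.hasFDerivAt)
    rw [map_zero A] at hcomp
    exact congrArg (· v) hcomp.fderiv
  have hΦ : IsDiffeoGerm fun p => ((F p).1, p.2) := by
    refine ⟨by fun_prop, by simp [hF0], bijective_fderiv_iff_jacDet_ne_zero.2 ?_⟩
    simp [jacDet, ((dF 0).hasFDerivAt.fst.prodMk hasFDerivAt_snd).fderiv, hF', hAB]
  obtain ⟨χ, hχ, hΦχ, -⟩ := hΦ.exists_inverse
  refine ⟨fun p => (F (χ p)).2, (sF.comp hχ.contDiff).snd, by simp [hχ.map_zero, hF0],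
    aEquiv_iff.2 ⟨A ∘ χ, B, (IsDiffeoGerm.of_continuousLinearEquiv A).comp hχ,
      .of_continuousLinearEquiv B, ?_⟩⟩
  filter_upwards [hΦχ] with p hp
  have hfst : (F (χ p)).1 = p.1 := (Prod.ext_iff.1 hp).1
  exact Prod.ext hfst rfl

end GraphForm

section NormalForm

variable {f : ℝ × ℝ → ℝ × ℝ} {g : ℝ × ℝ → ℝ} {n : ℕ}

lemma exists_jetEquiv_graph_binaryForm (sg : ContDiff ℝ ∞ g) (hg0 : g 0 = 0)
    (hg : VanishesToOrder ℝ n (pdy g) 0) :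
    ∃ a, JetEquiv (n + 1) (fun p => (p.1, g p)) fun p => (p.1, binaryForm (n + 1) a p) := by
  let r : ℝ × ℝ → ℝ := fun p => g p - g (p.1, 0)
  have sr : ContDiff ℝ ∞ r := by fun_prop
  have hpdy : pdy r = pdy g := by
    funext p
    rw [pdy_eq_deriv (sr.differentiable (by simp) p), pdy_eq_deriv (sg.differentiable (by simp) p)]
    exact deriv_sub_const (f := fun t => g (p.1, t)) (g (p.1, 0))
  have haxis : VanishesToOrder ℝ (n + 1) (fun p : ℝ × ℝ => r (p.1, 0)) 0 := fun i _ => by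
    simp [r]
  obtain ⟨a, ha⟩ := (vanishesToOrder_succ_of_pdy sr haxis (hpdy ▸ hg)).exists_sub_binaryForm sr
  have sb := contDiff_binaryForm (n + 1) a
  refine ⟨a, (jetEquiv_iff (by fun_prop) (by fun_prop)).2 ⟨_, _, .id, IsDiffeoGerm.triangular
    (h := fun t => g (t, 0)) (by fun_prop) hg0 one_ne_zero one_ne_zero, ?_⟩⟩
  simpa [r] using ha.clm_comp (ContinuousLinearMap.inr ℝ ℝ ℝ) (sr.sub sb)

lemma hasNullOrder_graph_binaryForm_iff (hn : n ≠ 0) (a : ℕ → ℝ) :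
    HasNullOrder n (fun p => (p.1, binaryForm (n + 1) a p)) ↔ a (n + 1) ≠ 0 := by
  have db : Differentiable ℝ (binaryForm (n + 1) a) :=
    (contDiff_binaryForm _ a).differentiable (by simp)
  let a' : ℕ → ℝ := fun i => (i + 1) * a (i + 1)
  have hjac : jacDet (fun p => (p.1, binaryForm (n + 1) a p)) = binaryForm n a' := by
    rw [← pdy_binaryForm_succ]
    exact funext fun p => jacDet_graph (db p)
  have hderiv (v : ℝ × ℝ) : fderiv ℝ (fun p => (p.1, binaryForm (n + 1) a p)) 0 v =
      (v.1, fderiv ℝ (binaryForm (n + 1) a) 0 v) := by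
    simp [(hasFDerivAt_fst.prodMk (db 0).hasFDerivAt).fderiv]
  have hlead (t : ℝ) : iteratedFDeriv ℝ n (binaryForm n a') 0 (fun _ => (0, t)) =
      n.factorial * ((n + 1) * a (n + 1) * t ^ n) := by
    rw [iteratedFDeriv_of_homogeneous (contDiff_binaryForm n a') (binaryForm_smul n a'),
      binaryForm_zero_left, smul_eq_mul]
  have hker : fderiv ℝ (binaryForm (n + 1) a) 0 (0, 1) = 0 := by
    have := congrFun (pdy_binaryForm_succ n a) 0
    rwa [← Prod.mk_zero_zero, binaryForm_zero_left, zero_pow hn, mul_zero] at this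
  rw [HasNullOrder, hjac]
  refine ⟨fun h => ?_, fun ha => ⟨vanishesToOrder_of_homogeneous (contDiff_binaryForm n a')
    (binaryForm_smul n a'), fun v hv hfv => ?_⟩⟩
  · have := h.2 (0, 1) (by simp) (by rw [hderiv, hker, Prod.mk_zero_zero])
    rw [hlead] at this
    exact fun ha => this (by rw [ha]; ring)
  · obtain ⟨x, y⟩ := v
    obtain rfl : x = 0 := congrArg Prod.fst ((hderiv _).symm.trans hfv)
    have hy : y ≠ 0 := fun h => hv (by rw [h, Prod.mk_zero_zero])
    rw [hlead]
    positivity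

/-- The map `(x, y) ↦ (x, β x³y + α x²y² + y⁴)`; the two normal forms are the cases `β = 1` and
`β = 0`. -/
def quarticNormalForm (β α : ℝ) (p : ℝ × ℝ) : ℝ × ℝ :=
  (p.1, β * p.1 ^ 3 * p.2 + α * p.1 ^ 2 * p.2 ^ 2 + p.2 ^ 4)

lemma quarticNormalForm_one (α : ℝ) : quarticNormalForm 1 α =
    fun p => (p.1, p.1 ^ 3 * p.2 + α * p.1 ^ 2 * p.2 ^ 2 + p.2 ^ 4) := by
  funext p
  rw [quarticNormalForm, one_mul]

lemma quarticNormalForm_zero (α : ℝ) : quarticNormalForm 0 α =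
    fun p => (p.1, α * p.1 ^ 2 * p.2 ^ 2 + p.2 ^ 4) := by
  funext p
  rw [quarticNormalForm, zero_mul, zero_mul, zero_add]

lemma contDiff_quarticNormalForm (β α : ℝ) : ContDiff ℝ ∞ (quarticNormalForm β α) := by
  unfold quarticNormalForm
  fun_prop

lemma hasNullOrder_quarticNormalForm (β α : ℝ) : HasNullOrder 3 (quarticNormalForm β α) := by
  let a : ℕ → ℝ := fun i => [0, β, α, 0, 1].getD i 0
  have hform : quarticNormalForm β α = fun p => (p.1, binaryForm 4 a p) := by
    funext p
    simp [quarticNormalForm, binaryForm, Finset.sum_range_succ, a, mul_assoc]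
  rw [hform, hasNullOrder_graph_binaryForm_iff three_ne_zero]
  simp [a]

lemma exists_pow_eq_of_odd (hn : Odd n) (x : ℝ) : ∃ y, y ^ n = x := by
  obtain hx | hx := le_total 0 x
  · exact ⟨_, Real.rpow_inv_natCast_pow hx hn.pos.ne'⟩
  · refine ⟨-(-x) ^ (n⁻¹ : ℝ), ?_⟩
    rw [hn.neg_pow, Real.rpow_inv_natCast_pow (neg_nonneg.2 hx) hn.pos.ne', neg_neg]

lemma exists_mul_pow_eq_zero_or_one (hn : Odd n) (s : ℝ) :
    ∃ k ≠ 0, s * k ^ n = 0 ∨ s * k ^ n = 1 := by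
  obtain rfl | hs := eq_or_ne s 0
  · exact ⟨1, one_ne_zero, .inl (zero_mul _)⟩
  · obtain ⟨k, hk⟩ := exists_pow_eq_of_odd hn s⁻¹
    refine ⟨k, ?_, .inr (by rw [hk, mul_inv_cancel₀ hs])⟩
    rintro rfl
    rw [zero_pow hn.pos.ne'] at hk
    exact inv_ne_zero hs hk.symm

/- The shear `y ↦ y + μx` with `μ = -a₃ / (4a₄)` removes the `xy³` term, the target change removes
the `x⁴` term, and the scaling `x ↦ kx` normalizes the `x³y` coefficient. -/
lemma exists_aEquiv_quarticNormalForm {a : ℕ → ℝ} (ha : a 4 ≠ 0) :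
    ∃ β α, (β = 0 ∨ β = 1) ∧
      AEquiv (fun p => (p.1, binaryForm 4 a p)) (quarticNormalForm β α) := by
  let μ : ℝ := -a 3 / (4 * a 4)
  let s : ℝ := (a 1 + 2 * μ * a 2 + 3 * μ ^ 2 * a 3 + 4 * μ ^ 3 * a 4) / a 4
  obtain ⟨k, hk, hβ⟩ := exists_mul_pow_eq_zero_or_one (n := 3) (by decide) s
  refine ⟨s * k ^ 3, (a 2 + 3 * μ * a 3 + 6 * μ ^ 2 * a 4) / a 4 * k ^ 2, hβ,
    aEquiv_iff.2 ⟨_, _, IsDiffeoGerm.triangular (h := fun x => -(μ * (k * x))) (by fun_prop)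
      (by simp) hk one_ne_zero, IsDiffeoGerm.triangular (h := fun x => binaryForm 4 a (x, μ * x))
      ((contDiff_binaryForm 4 a).comp (by fun_prop)) (by simp [binaryForm, Finset.sum_range_succ])
      (inv_ne_zero hk) (inv_ne_zero ha), .of_eq (funext fun p => ?_)⟩⟩
  refine Prod.ext (inv_mul_cancel_left₀ hk _) ?_
  have hμ : a 3 = -(4 * a 4 * μ) := by
    simp only [μ]
    field_simp
  simp only [Function.comp_apply, quarticNormalForm, binaryForm, Finset.sum_range_succ,
    Finset.sum_range_zero, s, hμ]
  field_simp
  ring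

lemma exists_jetEquiv_quarticNormalForm_iff (hf : fderiv ℝ f 0 ≠ 0) (sf : ContDiff ℝ ∞ f)
    (hf0 : f 0 = 0) :
    (∃ β α, (β = 0 ∨ β = 1) ∧ JetEquiv 4 f (quarticNormalForm β α)) ↔ HasNullOrder 3 f := by
  refine ⟨fun ⟨β, α, _, h⟩ => ?_, fun h => ?_⟩
  · have sq := contDiff_quarticNormalForm β α
    exact (hasNullOrder_quarticNormalForm β α).of_jetEquiv sq sf (by simp [quarticNormalForm])
      (h.symm sf sq hf0)
  · obtain ⟨g, sg, hg0, hfg⟩ := exists_aEquiv_graph hf sf hf0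
    have sgraph : ContDiff ℝ ∞ fun p : ℝ × ℝ => (p.1, g p) := by fun_prop
    have hgraph : HasNullOrder 3 fun p => (p.1, g p) := h.of_jetEquiv sf sgraph hf0 hfg.jetEquiv
    have hpdy : jacDet (fun p => (p.1, g p)) = pdy g :=
      funext fun p => jacDet_graph (sg.differentiable (by simp) p)
    obtain ⟨a, hga⟩ := exists_jetEquiv_graph_binaryForm sg hg0 (hpdy ▸ hgraph.1)
    have sa : ContDiff ℝ ∞ fun p : ℝ × ℝ => (p.1, binaryForm 4 a p) :=
      contDiff_fst.prodMk (contDiff_binaryForm 4 a)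
    have ha : a 4 ≠ 0 := (hasNullOrder_graph_binaryForm_iff three_ne_zero a).1
      (hgraph.of_jetEquiv sgraph sa (by simp [hg0]) hga)
    obtain ⟨β, α, hβ, haq⟩ := exists_aEquiv_quarticNormalForm ha
    have sq := contDiff_quarticNormalForm β α
    exact ⟨β, α, hβ, (hfg.jetEquiv.trans hga sf sgraph sa).trans haq.jetEquiv sf sa sq⟩

end NormalForm

theorem stmt19_general {f η : ℝ × ℝ → ℝ × ℝ} {U : Set (ℝ × ℝ)} (sf : ContDiff ℝ ∞ f)
    (hf0 : f 0 = 0) (hcr : CorankOne f) (hU : U ∈ 𝓝 0) (sη : ContDiffOn ℝ ∞ η U) (hη : η 0 ≠ 0)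
    (hfη : fderiv ℝ f 0 (η 0) = 0) :
    ((∃ α : ℝ, JetEquiv 4 f
        (fun p => (p.1, p.1 ^ 3 * p.2 + α * p.1 ^ 2 * p.2 ^ 2 + p.2 ^ 4))) ∨
      (∃ α : ℝ, JetEquiv 4 f
        (fun p => (p.1, α * p.1 ^ 2 * p.2 ^ 2 + p.2 ^ 4)))) ↔
      (fderiv ℝ (jacDet f) 0 = 0 ∧ hess (jacDet f) = 0 ∧
        etaIter η 3 (jacDet f) 0 ≠ 0) := by
  have hforms := exists_jetEquiv_quarticNormalForm_iff hcr.fderiv_ne_zero sf hf0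
  rw [hcr.hasNullOrder_iff_etaIter sf hU sη hη hfη,
    vanishesToOrder_three_iff_hess (contDiff_jacDet sf)] at hforms
  have hβ : (∃ β α, (β = 0 ∨ β = 1) ∧ JetEquiv 4 f (quarticNormalForm β α)) ↔
      (∃ α, JetEquiv 4 f (quarticNormalForm 1 α)) ∨
        ∃ α, JetEquiv 4 f (quarticNormalForm 0 α) := by
    simp only [or_and_right, exists_or, exists_and_left, exists_eq_left, or_comm]
  rw [hβ] at hforms
  simpa [quarticNormalForm_one, quarticNormalForm_zero, hcr.jacDet_eq_zero, and_assoc] using hforms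

theorem stmt19 (f η : ℝ × ℝ → ℝ × ℝ)
    (hf : ContDiff ℝ (⊤ : ℕ∞) f) (hf0 : f 0 = 0) (hcr : CorankOne f)
    (hη : IsNullVF f η) :
    ((∃ α : ℝ, JetEquiv 4 f
        (fun p => (p.1, p.1 ^ 3 * p.2 + α * p.1 ^ 2 * p.2 ^ 2 + p.2 ^ 4))) ∨
      (∃ α : ℝ, JetEquiv 4 f
        (fun p => (p.1, α * p.1 ^ 2 * p.2 ^ 2 + p.2 ^ 4)))) ↔
      (fderiv ℝ (jacDet f) 0 = 0 ∧ hess (jacDet f) = 0 ∧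
        etaIter η 3 (jacDet f) 0 ≠ 0) :=
  let ⟨hη0, _, hU, sη, hker⟩ := hη
  stmt19_general hf hf0 hcr hU sη hη0 (hker 0 (mem_of_mem_nhds hU) hcr.jacDet_eq_zero)
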